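/- arXiv:1511.02202 — 2 statements merged into one kernel-verified Lean document; each statement's English description precedes it below -/
import Mathlib

section
/- Let S be a Haydon space and let (μₙ), (νₙ) be sequences of nonnegative monotone additive functions on the topology of S with μₙ(S) = νₙ(S) = 1 for all n, such that μₘ and νₙ are 𝒰(S)-separated for all m, n (for each ε > 0 a clopen set A exists with μₘ(A) < ε and νₙ(S∖A) < ε). Then there is an infinite set Λ ⊆ ℕ such that for each ε > 0 there exists a single clopen set A with μₘ(A) < ε and νₙ(S∖A) < ε for all m, n ∈ Λ. -/
/-!
Only the Boolean algebra of clopen sets matters, so we work in a Boolean algebra in which every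
disjoint sequence has a subsequence with a supremum. Weighted sums of the two sequences give
separated contents `σ`, `τ` with `μ n ≪ σ` and `ν n ≪ τ`. After passing to a subsequence,
`μ n + ν n` is, up to `ε`, uniformly absolutely continuous with respect to `σ + τ` off disjoint
elements `u n` (subsequence splitting). An element `b` separating `σ` from `τ` therefore separates
`μ n` from `ν n` off `u n`, while some `b n` separates them on `u n`; subsequential completeness
lets us change `b` into `b n` on `u n` for infinitely many `n` at once, at a small `σ + τ`-cost.
This is uniform separation for one `ε`. Since the element found is also small for `σ` and its
complement for `τ`, finitely many further indices come for free, and a diagonal argument handles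
all `ε` simultaneously.
-/

open Filter Function Set Topology

section Contents

variable {B : Type*} [BooleanAlgebra B]

/-- A content on a Boolean algebra: a nonnegative finitely additive real function. -/
structure IsContent (p : B → ℝ) : Prop where
  nonneg (a : B) : 0 ≤ p a
  sup_of_disjoint {a b : B} : Disjoint a b → p (a ⊔ b) = p a + p b

namespace IsContent

variable {p q σ τ : B → ℝ}

lemma map_bot (hp : IsContent p) : p ⊥ = 0 := by
  simpa using hp.sup_of_disjoint (disjoint_bot_left (a := (⊥ : B)))

lemma mono (hp : IsContent p) : Monotone p := fun a b hab => by
  rw [← sup_sdiff_cancel_right hab, hp.sup_of_disjoint disjoint_sdiff_self_right]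
  exact le_add_of_nonneg_right (hp.nonneg _)

lemma le_add_sdiff (hp : IsContent p) (a b : B) : p a ≤ p b + p (a \ b) := by
  rw [← hp.sup_of_disjoint disjoint_sdiff_self_right, sup_sdiff_self_right]
  exact hp.mono le_sup_right

lemma sup_le_add (hp : IsContent p) (a b : B) : p (a ⊔ b) ≤ p a + p b :=
  (hp.le_add_sdiff (a ⊔ b) a).trans <| by
    gcongr
    exact hp.mono (sdiff_le_iff.2 le_rfl)

lemma lt_add_of_inf_eq_inf (hp : IsContent p) (hσ : IsContent σ) (hτ : IsContent τ) {a b u : B}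
    {δ ε : ℝ} (hab : a ⊓ u = b ⊓ u) (hδ : σ a + τ bᶜ < δ)
    (hsmall : ∀ x, Disjoint x u → σ x + τ x < δ → p x < ε) : p a < p b + ε := by
  have hdisj : Disjoint (a \ b) u := by
    rw [disjoint_iff, sdiff_inf_right_comm, hab, sdiff_eq_bot_iff]
    exact inf_le_left
  have hσ_le : σ (a \ b) ≤ σ a := hσ.mono sdiff_le
  have hτ_le : τ (a \ b) ≤ τ bᶜ := hτ.mono (sdiff_eq.trans_le inf_le_right)
  have hpab : p (a \ b) < ε := hsmall _ hdisj ((add_le_add hσ_le hτ_le).trans_lt hδ)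
  exact (hp.le_add_sdiff a b).trans_lt (add_lt_add_right hpab _)

lemma add (hp : IsContent p) (hq : IsContent q) : IsContent (p + q) where
  nonneg a := add_nonneg (hp.nonneg a) (hq.nonneg a)
  sup_of_disjoint hab := by
    simp only [Pi.add_apply, hp.sup_of_disjoint hab, hq.sup_of_disjoint hab]
    ring

lemma finset_sup {ι : Type*} (hp : IsContent p) {u : ι → B} (hu : Pairwise (Disjoint on u))
    (F : Finset ι) : p (F.sup u) = ∑ i ∈ F, p (u i) := by
  classical
  induction F using Finset.induction_on with
  | empty => simp [hp.map_bot]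
  | insert i F hi ih =>
    rw [Finset.sup_insert, Finset.sum_insert hi, ← ih, hp.sup_of_disjoint]
    exact Finset.disjoint_sup_right.2 fun j hj => hu (ne_of_mem_of_not_mem hj hi).symm

lemma exists_lt_of_pairwise_disjoint (hp : IsContent p) {u : ℕ → B}
    (hu : Pairwise (Disjoint on u)) {δ : ℝ} (hδ : 0 < δ) : ∃ i, p (u i) < δ := by
  by_contra! hle
  obtain ⟨N, hN⟩ := exists_nat_gt (p ⊤ / δ)
  refine ((div_lt_iff₀ hδ).1 hN).not_ge ?_
  calc
    N * δ = ∑ _i ∈ Finset.range N, δ := by simp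
    _ ≤ ∑ i ∈ Finset.range N, p (u i) := Finset.sum_le_sum fun i _ => hle i
    _ = p ((Finset.range N).sup u) := (hp.finset_sup hu _).symm
    _ ≤ p ⊤ := hp.mono le_top

end IsContent

/-- Absolute continuity, in `ε`-`δ` form, of a set function with respect to another one. -/
def AbsolutelyContinuous {α : Type*} (p σ : α → ℝ) : Prop :=
  ∀ ε > 0, ∃ δ > 0, ∀ a, σ a < δ → p a < ε

namespace AbsolutelyContinuous

variable {p q σ τ : B → ℝ}

lemma add (hσ : IsContent σ) (hτ : IsContent τ) (hp : AbsolutelyContinuous p σ)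
    (hq : AbsolutelyContinuous q τ) : AbsolutelyContinuous (p + q) (σ + τ) := fun ε hε => by
  obtain ⟨δ, hδ, hpδ⟩ := hp (ε / 2) (half_pos hε)
  obtain ⟨δ', hδ', hqδ'⟩ := hq (ε / 2) (half_pos hε)
  refine ⟨min δ δ', lt_min hδ hδ', fun a ha => ?_⟩
  obtain ⟨haδ, haδ'⟩ := lt_min_iff.1 ha
  rw [← add_halves ε]
  exact add_lt_add (hpδ a ((le_add_of_nonneg_right (hτ.nonneg a)).trans_lt haδ))
    (hqδ' a ((le_add_of_nonneg_left (hσ.nonneg a)).trans_lt haδ'))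

lemma exists_forall_mem_finite {α ι : Type*} {p : ι → α → ℝ} {σ : α → ℝ}
    (hp : ∀ i, AbsolutelyContinuous (p i) σ) {F : Set ι} (hF : F.Finite) {ε : ℝ} (hε : 0 < ε) :
    ∃ δ > 0, ∀ a, σ a < δ → ∀ i ∈ F, p i a < ε := by
  choose δ hδ hpδ using fun i => hp i ε hε
  have hsmall : ∀ᶠ η in 𝓝[>] (0 : ℝ), ∀ i ∈ F, η < δ i :=
    (eventually_all_finite hF).2 fun i _ => eventually_nhdsWithin_of_eventually_nhds
      (eventually_lt_nhds (hδ i))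
  obtain ⟨η, hηδ, hη⟩ := (hsmall.and self_mem_nhdsWithin).exists
  exact ⟨η, hη, fun a ha i hi => hpδ i a (ha.trans (hηδ i hi))⟩

end AbsolutelyContinuous

/-- Separation of two set functions: some element is almost null for the first, while its
complement is almost null for the second. -/
def Separated (p q : B → ℝ) : Prop :=
  ∀ ε > 0, ∃ a, p a < ε ∧ q aᶜ < ε

namespace Separated

variable {p q r σ τ : B → ℝ}

lemma symm (h : Separated p q) : Separated q p := fun ε hε => by
  obtain ⟨a, hpa, hqa⟩ := h ε hε
  exact ⟨aᶜ, hqa, by rwa [compl_compl]⟩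

lemma zero_left (hr : IsContent r) : Separated 0 r := fun ε hε =>
  ⟨⊤, hε, by rwa [compl_top, hr.map_bot]⟩

lemma add_left (hp : Monotone p) (hq : Monotone q) (hr : IsContent r) (hpr : Separated p r)
    (hqr : Separated q r) : Separated (p + q) r := fun ε hε => by
  obtain ⟨a, hpa, hra⟩ := hpr (ε / 2) (half_pos hε)
  obtain ⟨b, hqb, hrb⟩ := hqr (ε / 2) (half_pos hε)
  refine ⟨a ⊓ b, ?_, ?_⟩
  · rw [← add_halves ε]
    exact add_lt_add ((hp inf_le_left).trans_lt hpa) ((hq inf_le_right).trans_lt hqb)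
  · rw [← add_halves ε, compl_inf]
    exact (hr.sup_le_add _ _).trans_lt (add_lt_add hra hrb)

lemma sum_left {ι : Type*} {p : ι → B → ℝ} (hp : ∀ i, Monotone (p i)) (hr : IsContent r)
    (h : ∀ i, Separated (p i) r) (F : Finset ι) : Separated (∑ i ∈ F, p i) r :=
  (Finset.sum_induction p (fun f => Monotone f ∧ Separated f r)
    (fun _ _ hf hg => ⟨hf.1.add hg.1, add_left hf.1 hg.1 hr hf.2 hg.2⟩)
    ⟨monotone_const, zero_left hr⟩ fun i _ => ⟨hp i, h i⟩).2

lemma exists_lt_of_absolutelyContinuous (h : Separated σ τ) (hp : AbsolutelyContinuous p σ)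
    (hq : AbsolutelyContinuous q τ) {ε η : ℝ} (hε : 0 < ε) (hη : 0 < η) :
    ∃ a, σ a < η ∧ τ aᶜ < η ∧ p a < ε ∧ q aᶜ < ε := by
  obtain ⟨δ, hδ, hpδ⟩ := hp ε hε
  obtain ⟨δ', hδ', hqδ'⟩ := hq ε hε
  obtain ⟨a, hσa, hτa⟩ := h (min η (min δ δ')) (by positivity)
  simp only [lt_min_iff] at hσa hτa
  exact ⟨a, hσa.1, hτa.1, hpδ a hσa.2.1, hqδ' _ hτa.2.2⟩

end Separated

/-- The control content of a sequence of contents: a convergent weighted sum, with respect to which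
every member of the sequence is absolutely continuous. It is meaningful only for sequences bounded
at `⊤`, the sum being `0` by convention when it diverges. -/
noncomputable def controlContent (p : ℕ → B → ℝ) (a : B) : ℝ :=
  ∑' i, (1 / 2) ^ i * p i a

namespace IsContent

variable {p : ℕ → B → ℝ} {r : B → ℝ} {c : ℝ}

lemma summable_controlContent (hp : ∀ i, IsContent (p i)) (hc : ∀ i, p i ⊤ ≤ c) (a : B) :
    Summable fun i => (1 / 2) ^ i * p i a :=
  .of_nonneg_of_le (fun i => mul_nonneg (by positivity) ((hp i).nonneg a))
    (fun i => by gcongr; exact ((hp i).mono le_top).trans (hc i))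
    (summable_geometric_two.mul_right c)

protected lemma controlContent (hp : ∀ i, IsContent (p i)) (hc : ∀ i, p i ⊤ ≤ c) :
    IsContent (controlContent p) where
  nonneg a := tsum_nonneg fun i => mul_nonneg (by positivity) ((hp i).nonneg a)
  sup_of_disjoint {a b} hab := by
    simp only [controlContent, (hp _).sup_of_disjoint hab, mul_add]
    exact (summable_controlContent hp hc a).tsum_add (summable_controlContent hp hc b)

lemma absolutelyContinuous_controlContent (hp : ∀ i, IsContent (p i)) (hc : ∀ i, p i ⊤ ≤ c)
    (i : ℕ) : AbsolutelyContinuous (p i) (controlContent p) := fun ε hε => by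
  refine ⟨(1 / 2) ^ i * ε, by positivity, fun a ha => ?_⟩
  have hle : (1 / 2) ^ i * p i a ≤ controlContent p a :=
    (summable_controlContent hp hc a).le_tsum i
      fun j _ => mul_nonneg (by positivity) ((hp j).nonneg a)
  exact lt_of_mul_lt_mul_left (hle.trans_lt ha) (by positivity)

lemma exists_controlContent_le_sum_add (hp : ∀ i, IsContent (p i)) (hc : ∀ i, p i ⊤ ≤ c) {ε : ℝ}
    (hε : 0 < ε) : ∃ N, ∀ a, controlContent p a ≤ ∑ i ∈ Finset.range N, p i a + ε := by
  have htail := tendsto_sum_nat_add fun i : ℕ => (1 / 2 : ℝ) ^ i * c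
  obtain ⟨N, hN⟩ := (htail.eventually_lt_const hε).exists
  refine ⟨N, fun a => ?_⟩
  have hsum := summable_controlContent hp hc a
  rw [controlContent, ← hsum.sum_add_tsum_nat_add N]
  refine add_le_add (Finset.sum_le_sum fun i _ => ?_) (le_trans ?_ hN.le)
  · exact mul_le_of_le_one_left ((hp i).nonneg a) (pow_le_one₀ (by norm_num) (by norm_num))
  · refine ((summable_nat_add_iff N).2 hsum).tsum_le_tsum (fun i => ?_)
      ((summable_nat_add_iff N).2 (summable_geometric_two.mul_right c))
    gcongr
    exact ((hp _).mono le_top).trans (hc _)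

lemma separated_controlContent_left (hp : ∀ i, IsContent (p i)) (hc : ∀ i, p i ⊤ ≤ c)
    (hr : IsContent r) (h : ∀ i, Separated (p i) r) : Separated (controlContent p) r :=
  fun ε hε => by
  obtain ⟨N, hN⟩ := exists_controlContent_le_sum_add hp hc (half_pos hε)
  obtain ⟨a, hpa, hra⟩ :=
    Separated.sum_left (fun i => (hp i).mono) hr h (Finset.range N) (ε / 2) (half_pos hε)
  rw [Finset.sum_apply] at hpa
  exact ⟨a, by linarith [hN a], hra.trans (half_lt_self hε)⟩

lemma separated_controlContent {q : ℕ → B → ℝ} {d : ℝ} (hp : ∀ i, IsContent (p i))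
    (hq : ∀ j, IsContent (q j)) (hc : ∀ i, p i ⊤ ≤ c) (hd : ∀ j, q j ⊤ ≤ d)
    (h : ∀ i j, Separated (p i) (q j)) : Separated (controlContent p) (controlContent q) :=
  (separated_controlContent_left hq hd (.controlContent hp hc) fun j =>
    (separated_controlContent_left hp hc (hq j) fun i => h i j).symm).symm

end IsContent

end Contents

section Splitting

/-- The functions `l n`, `n ∈ L`, concentrate mass `s` with respect to `σ` if they take values at
least `s` at elements of arbitrarily small `σ`-mass. -/
def Concentrates {α : Type*} (l : ℕ → α → ℝ) (σ : α → ℝ) (s : ℝ) (L : Set ℕ) : Prop :=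
  ∀ η > 0, ∃ n ∈ L, ∃ a, σ a < η ∧ s ≤ l n a

lemma not_concentrates {α : Type*} {l : ℕ → α → ℝ} {σ : α → ℝ} {s : ℝ} {L : Set ℕ} :
    ¬ Concentrates l σ s L ↔ ∃ η > 0, ∀ n ∈ L, ∀ a, σ a < η → l n a < s := by
  simp only [Concentrates]
  push Not
  rfl

variable {B : Type*} [BooleanAlgebra B]
variable {l : ℕ → B → ℝ} {σ : B → ℝ} {c s δ ε : ℝ} {L : Set ℕ}

lemma exists_not_concentrates_forall_concentrates (hl : ∀ n, IsContent (l n)) (hσ : IsContent σ)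
    (hc : ∀ n, l n ⊤ ≤ c) (hε : 0 < ε) :
    ∃ t, ∃ L : Set ℕ, L.Infinite ∧ ¬ Concentrates l σ t L ∧
      ∀ L' : Set ℕ, L'.Infinite → Concentrates l σ (t - ε) L' := by
  let T : Set ℝ := {t | ∃ L : Set ℕ, L.Infinite ∧ ¬ Concentrates l σ t L}
  have hT : BddBelow T := by
    refine ⟨0, ?_⟩
    rintro t ⟨L, hL, ht⟩
    obtain ⟨η, hη, hsmall⟩ := not_concentrates.1 ht
    obtain ⟨n, hn⟩ := hL.nonempty
    have hbot := hsmall n hn ⊥ (by rwa [hσ.map_bot])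
    exact ((hl n).nonneg ⊥).trans hbot.le
  have hcT : c + 1 ∈ T := ⟨univ, infinite_univ, not_concentrates.2 ⟨1, one_pos, fun n _ a _ =>
    (((hl n).mono le_top).trans (hc n)).trans_lt (lt_add_one c)⟩⟩
  obtain ⟨t, ⟨L, hL, ht⟩, htlt⟩ :=
    exists_lt_of_csInf_lt ⟨_, hcT⟩ (lt_add_of_pos_right (sInf T) hε)
  refine ⟨t, L, hL, ht, fun L' hL' => ?_⟩
  by_contra hcon
  linarith [csInf_le hT (show t - ε ∈ T from ⟨L', hL', hcon⟩)]

/- Otherwise every such `a` has mass at least `γ` for almost all `l k`; piling up `N` almost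
disjoint ones produces an element of mass at least `N * γ` for almost all `l k`. -/
lemma Concentrates.exists_infinite_lt (h : Concentrates l σ s L) (hl : ∀ n, IsContent (l n))
    (hσ : IsContent σ) (hc : ∀ n, l n ⊤ ≤ c) (hlσ : ∀ n, AbsolutelyContinuous (l n) σ)
    (hL : L.Infinite) (hε : 0 < ε) (hδ : 0 < δ) {γ : ℝ} (hγ : 0 < γ) :
    ∃ n ∈ L, ∃ a, σ a < δ ∧ s - ε ≤ l n a ∧ {k ∈ L | l k a < γ}.Infinite := by
  by_contra! hcon
  have hpile (N : ℕ) : ∀ η > 0, ∃ d, σ d < η ∧ {k ∈ L | l k d < N * γ}.Finite := by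
    induction N with
    | zero => exact fun η hη => ⟨⊥, by rwa [hσ.map_bot], by simp [(hl _).map_bot]⟩
    | succ N ih =>
      intro η hη
      obtain ⟨n, hn, a, hσa, hna⟩ := h (min (η / 2) δ) (by positivity)
      obtain ⟨ρ, hρ, hnρ⟩ := hlσ n ε hε
      obtain ⟨d, hσd, hd⟩ := ih (min (η / 2) ρ) (by positivity)
      obtain ⟨hση, hσδ⟩ := lt_min_iff.1 hσa
      obtain ⟨hdη, hdρ⟩ := lt_min_iff.1 hσd
      have hσad : σ (a \ d) ≤ σ a := hσ.mono sdiff_le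
      have hfin : {k ∈ L | l k (a \ d) < γ}.Finite :=
        hcon n hn (a \ d) (hσad.trans_lt hσδ) (by linarith [(hl n).le_add_sdiff a d, hnρ d hdρ])
      refine ⟨d ⊔ a \ d, by linarith [hσ.sup_le_add d (a \ d)], (hd.union hfin).subset ?_⟩
      rintro k ⟨hk, hlt⟩
      rw [(hl k).sup_of_disjoint disjoint_sdiff_self_right, Nat.cast_succ, add_one_mul] at hlt
      by_contra hnot
      simp only [mem_union, mem_ofPred_eq, not_or, not_and, not_lt] at hnot
      linarith [hnot.1 hk, hnot.2 hk]
  obtain ⟨N, hN⟩ := exists_nat_gt (c / γ)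
  obtain ⟨d, -, hd⟩ := hpile N 1 one_pos
  refine hL (hd.subset fun k hk => ⟨hk, ?_⟩)
  exact (((hl k).mono le_top).trans (hc k)).trans_lt ((div_lt_iff₀ hγ).1 hN)

lemma Concentrates.exists_disjoint (h : Concentrates l σ s L) (hl : ∀ n, IsContent (l n))
    (hσ : IsContent σ) (hc : ∀ n, l n ⊤ ≤ c) (hlσ : ∀ n, AbsolutelyContinuous (l n) σ)
    (hL : L.Infinite) (hδ : 0 < δ) {r : B} (hr : ∃ ρ < ε, ∀ n ∈ L, l n r ≤ ρ) (hε : 0 < ε) :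
    ∃ n ∈ L, ∃ a, Disjoint r a ∧ σ a < δ ∧ s - 2 * ε ≤ l n a ∧
      ∃ L' ⊆ L, L'.Infinite ∧ (∀ k ∈ L', n < k) ∧ ∃ ρ < ε, ∀ k ∈ L', l k (r ⊔ a) ≤ ρ := by
  obtain ⟨ρ, hρ, hrρ⟩ := hr
  obtain ⟨n, hn, a, hσa, hna, hinf⟩ :=
    h.exists_infinite_lt hl hσ hc hlσ hL hε hδ (half_pos (sub_pos.2 hρ))
  refine ⟨n, hn, a \ r, disjoint_sdiff_self_right, (hσ.mono sdiff_le).trans_lt hσa,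
    by linarith [(hl n).le_add_sdiff a r, hrρ n hn], {k ∈ L | l k a < (ε - ρ) / 2} \ Iic n,
    fun k hk => hk.1.1, hinf.sdiff (finite_Iic n), fun k hk => not_le.1 hk.2,
    ρ + (ε - ρ) / 2, by linarith, ?_⟩
  rintro k ⟨⟨hk, hka⟩, -⟩
  rw [sup_sdiff_self_right]
  linarith [(hl k).sup_le_add r a, hrρ k hk]

lemma exists_strictMono_disjoint_of_concentrates (hl : ∀ n, IsContent (l n)) (hσ : IsContent σ)
    (hc : ∀ n, l n ⊤ ≤ c) (hlσ : ∀ n, AbsolutelyContinuous (l n) σ)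
    (h : ∀ L' ⊆ L, L'.Infinite → Concentrates l σ s L') (hL : L.Infinite) (hδ : 0 < δ)
    (hε : 0 < ε) :
    ∃ f : ℕ → ℕ, StrictMono f ∧ (∀ k, f k ∈ L) ∧ ∃ u : ℕ → B, Pairwise (Disjoint on u) ∧
      ∀ k, σ (u k) < δ ∧ s - 2 * ε ≤ l (f k) (u k) := by
  let State := {P : Set ℕ × B // P.1 ⊆ L ∧ P.1.Infinite ∧ ∃ ρ < ε, ∀ n ∈ P.1, l n P.2 ≤ ρ}
  have hstep (P : State) : ∃ n ∈ P.1.1, ∃ a, Disjoint P.1.2 a ∧ (σ a < δ ∧ s - 2 * ε ≤ l n a) ∧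
      ∃ Q : State, (∀ k ∈ Q.1.1, n < k) ∧ Q.1.2 = P.1.2 ⊔ a := by
    obtain ⟨⟨L', r⟩, hL', hinf, hr⟩ := P
    obtain ⟨n, hn, a, hra, hσa, hna, L'', hL'', hinf', hlt, hr'⟩ :=
      (h L' hL' hinf).exists_disjoint hl hσ hc hlσ hinf hδ hr hε
    exact ⟨n, hn, a, hra, ⟨hσa, hna⟩, ⟨(L'', r ⊔ a), hL''.trans hL', hinf', hr'⟩, hlt, rfl⟩
  choose n hn a hdisj ha next hlt hnext using hstep
  let P (k : ℕ) : State :=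
    next^[k] ⟨(L, ⊥), subset_rfl, hL, 0, hε, fun n _ => (hl n).map_bot.le⟩
  have hP (k : ℕ) : P (k + 1) = next (P k) := iterate_succ_apply' next k _
  have hmono : Monotone fun k => (P k).1.2 := monotone_nat_of_le_succ fun k => by
    rw [hP, hnext]
    exact le_sup_left
  have hle {i j : ℕ} (hij : i < j) : a (P i) ≤ (P j).1.2 := by
    refine le_trans ?_ (hmono (Nat.succ_le_of_lt hij))
    simp only [Nat.succ_eq_add_one, hP, hnext, le_sup_right]
  refine ⟨fun k => n (P k), strictMono_nat_of_lt_succ fun k => hlt (P k) _ ?_,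
    fun k => (P k).2.1 (hn _), fun k => a (P k), ?_, fun k => ha _⟩
  · rw [← hP]
    exact hn _
  · exact (pairwise_disjoint_on _).2 fun i j hij => (hdisj (P j)).mono_left (hle hij)

lemma exists_strictMono_splitting (hl : ∀ n, IsContent (l n)) (hσ : IsContent σ)
    (hc : ∀ n, l n ⊤ ≤ c) (hlσ : ∀ n, AbsolutelyContinuous (l n) σ) (hε : 0 < ε) :
    ∃ δ > 0, ∃ f : ℕ → ℕ, StrictMono f ∧ ∃ u : ℕ → B, Pairwise (Disjoint on u) ∧
      ∀ k a, Disjoint a (u k) → σ a < δ → l (f k) a < ε := by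
  obtain ⟨t, L, hL, ht, hconc⟩ :=
    exists_not_concentrates_forall_concentrates hl hσ hc (ε := ε / 3) (by positivity)
  obtain ⟨δ, hδ, hlt⟩ := not_concentrates.1 ht
  obtain ⟨f, hf, hfL, u, hu, hfu⟩ :=
    exists_strictMono_disjoint_of_concentrates hl hσ hc hlσ (fun L' _ => hconc L') hL
      (half_pos hδ) (ε := ε / 3) (by positivity)
  refine ⟨δ / 2, half_pos hδ, f, hf, u, hu, fun k a hau hσa => ?_⟩
  obtain ⟨hσu, hlu⟩ := hfu k
  have hsup : l (f k) (a ⊔ u k) < t :=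
    hlt (f k) (hfL k) (a ⊔ u k) (by linarith [hσ.sup_le_add a (u k)])
  rw [(hl _).sup_of_disjoint hau] at hsup
  linarith

end Splitting

section SubsequentialCompleteness

lemma disjoint_of_isLUB_left {α : Type*} [HeytingAlgebra α] {s : Set α} {a b : α} (ha : IsLUB s a)
    (h : ∀ x ∈ s, Disjoint x b) : Disjoint a b :=
  le_compl_iff_disjoint_right.1 <| ha.2 fun x hx => le_compl_iff_disjoint_right.2 (h x hx)

/-- Haydon's subsequential completeness property of a Boolean algebra: every disjoint sequence has a
subsequence with a supremum. -/
def SubseqComplete (B : Type*) [BooleanAlgebra B] : Prop :=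
  ∀ u : ℕ → B, Pairwise (Disjoint on u) →
    ∃ f : ℕ → ℕ, StrictMono f ∧ ∃ w, IsLUB (range (u ∘ f)) w

namespace SubseqComplete

variable {B : Type*} [BooleanAlgebra B] {p σ τ : B → ℝ} {μ ν : ℕ → B → ℝ} {u : ℕ → B} {c ε δ : ℝ}

/- Split `ℕ` into infinitely many infinite sets; the suprema of subsequences of the corresponding
parts of `u` are again disjoint, so one of them has small mass. -/
lemma exists_strictMono_le (hB : SubseqComplete B) (hp : IsContent p)
    (hu : Pairwise (Disjoint on u)) (hδ : 0 < δ) :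
    ∃ f : ℕ → ℕ, StrictMono f ∧ ∃ w, p w < δ ∧ ∀ k, u (f k) ≤ w := by
  have hpair (i : ℕ) : StrictMono (Nat.pair i) := fun _ _ => Nat.pair_lt_pair_right i
  choose g hg w hw using fun i =>
    hB (u ∘ Nat.pair i) (hu.comp_of_injective (hpair i).injective)
  have hdisj : Pairwise (Disjoint on w) := by
    refine fun i j hij => disjoint_of_isLUB_left (hw i) ?_
    rintro _ ⟨k, rfl⟩
    refine (disjoint_of_isLUB_left (hw j) ?_).symm
    rintro _ ⟨m, rfl⟩
    exact hu fun heq => hij (Nat.pair_eq_pair.1 heq).1.symm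
  obtain ⟨i, hi⟩ := hp.exists_lt_of_pairwise_disjoint hdisj hδ
  exact ⟨Nat.pair i ∘ g i, (hpair i).comp (hg i), w i, hi, fun k => (hw i).1 (mem_range_self k)⟩

lemma exists_strictMono_inf_eq_inf (hB : SubseqComplete B) (hu : Pairwise (Disjoint on u))
    (b : ℕ → B) : ∃ f : ℕ → ℕ, StrictMono f ∧ ∃ v, ∀ k, v ⊓ u (f k) = b (f k) ⊓ u (f k) := by
  obtain ⟨f, hf, v, hv⟩ := hB (fun k => b k ⊓ u k) fun i j hij =>
    (hu hij).mono inf_le_right inf_le_right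
  refine ⟨f, hf, v, fun k => le_antisymm (le_inf ?_ inf_le_right)
    (le_inf (hv.1 (mem_range_self k)) inf_le_right)⟩
  have hdisj : Disjoint v (u (f k) \ b (f k)) := disjoint_of_isLUB_left hv <| by
    rintro _ ⟨j, rfl⟩
    obtain rfl | hjk := eq_or_ne j k
    · exact disjoint_sdiff_self_right.mono_left inf_le_left
    · exact (hu (hf.injective.ne hjk)).mono inf_le_right sdiff_le
  rwa [disjoint_iff, ← inf_sdiff_assoc, sdiff_eq_bot_iff] at hdisj

lemma exists_strictMono_patch (hB : SubseqComplete B) (hp : IsContent p)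
    (hu : Pairwise (Disjoint on u)) (hδ : 0 < δ) (b₀ : B) (b : ℕ → B) :
    ∃ f : ℕ → ℕ, StrictMono f ∧ ∃ a, p (a \ b₀) < δ ∧ p (b₀ \ a) < δ ∧
      ∀ k, a ⊓ u (f k) = b (f k) ⊓ u (f k) := by
  obtain ⟨f, hf, w, hpw, huw⟩ := hB.exists_strictMono_le hp hu hδ
  obtain ⟨g, hg, v, hvu⟩ :=
    hB.exists_strictMono_inf_eq_inf (hu.comp_of_injective hf.injective) (b ∘ f)
  refine ⟨f ∘ g, hf.comp hg, b₀ \ w ⊔ w ⊓ v, (hp.mono ?_).trans_lt hpw,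
    (hp.mono (sdiff_le_comm.1 le_sup_left)).trans_lt hpw, fun k => ?_⟩
  · exact sdiff_le_iff.2 (sup_le_sup sdiff_le inf_le_left)
  · have hdisj : Disjoint (b₀ \ w) (u (f (g k))) := disjoint_sdiff_self_left.mono_right (huw _)
    calc
      (b₀ \ w ⊔ w ⊓ v) ⊓ u (f (g k)) = v ⊓ (w ⊓ u (f (g k))) := by
        rw [inf_sup_right, hdisj.eq_bot, bot_sup_eq, inf_comm w, inf_assoc]
      _ = v ⊓ u (f (g k)) := by rw [inf_eq_right.2 (huw _)]
      _ = b (f (g k)) ⊓ u (f (g k)) := hvu k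

lemma exists_strictMono_separated (hB : SubseqComplete B) (hσ : IsContent σ) (hτ : IsContent τ)
    (hμ : ∀ n, IsContent (μ n)) (hν : ∀ n, IsContent (ν n)) (hμc : ∀ n, μ n ⊤ ≤ c)
    (hνc : ∀ n, ν n ⊤ ≤ c) (hμσ : ∀ n, AbsolutelyContinuous (μ n) σ)
    (hντ : ∀ n, AbsolutelyContinuous (ν n) τ) (h : Separated σ τ) (hε : 0 < ε) :
    ∃ f : ℕ → ℕ, StrictMono f ∧ ∃ a, σ a < ε ∧ τ aᶜ < ε ∧
      ∀ k, μ (f k) a < ε ∧ ν (f k) aᶜ < ε := by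
  obtain ⟨δ, hδ, f, hf, u, hu, hsplit⟩ := exists_strictMono_splitting
    (fun n => (hμ n).add (hν n)) (hσ.add hτ) (fun n => add_le_add (hμc n) (hνc n))
    (fun n => (hμσ n).add hσ hτ (hντ n)) (half_pos hε)
  obtain ⟨η, hη, hηε, hηδ⟩ : ∃ η > 0, 2 * η ≤ ε ∧ 3 * η ≤ δ :=
    ⟨min (ε / 2) (δ / 3), by positivity, by linarith [min_le_left (ε / 2) (δ / 3)],
      by linarith [min_le_right (ε / 2) (δ / 3)]⟩
  choose b hσb hτb hμb hνb using fun k =>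
    h.exists_lt_of_absolutelyContinuous (hμσ (f k)) (hντ (f k)) (half_pos hε) hη
  obtain ⟨g, hg, a, hab, hba, hau⟩ := hB.exists_strictMono_patch (hσ.add hτ) hu hη (b 0) b
  simp only [Pi.add_apply] at hsplit hab hba
  have hσa : σ a < 2 * η := by
    linarith [hσ.le_add_sdiff a (b 0), hσb 0, hτ.nonneg (a \ b 0)]
  have hτa : τ aᶜ < 2 * η := by
    have hτsdiff := hτ.le_add_sdiff aᶜ (b 0)ᶜ
    rw [compl_sdiff_compl] at hτsdiff
    linarith [hτb 0, hσ.nonneg (b 0 \ a)]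
  have hau' (k : ℕ) : aᶜ ⊓ u (g k) = (b (g k))ᶜ ⊓ u (g k) := by
    rw [inf_comm, ← _root_.sdiff_eq, ← sdiff_inf_self_right, hau, sdiff_inf_self_right,
      _root_.sdiff_eq, inf_comm]
  refine ⟨f ∘ g, hf.comp hg, a, hσa.trans_le hηε, hτa.trans_le hηε, fun k => ⟨?_, ?_⟩⟩
  · have hμa : μ (f (g k)) a < μ (f (g k)) (b (g k)) + ε / 2 :=
      (hμ _).lt_add_of_inf_eq_inf (δ := δ) hσ hτ (hau k) (by linarith [hτb (g k)]) fun x hx hlt =>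
        (le_add_of_nonneg_right ((hν _).nonneg x)).trans_lt (hsplit (g k) x hx hlt)
    exact hμa.trans_le (by linarith [hμb (g k)])
  · have hνa : ν (f (g k)) aᶜ < ν (f (g k)) (b (g k))ᶜ + ε / 2 :=
      (hν _).lt_add_of_inf_eq_inf (δ := δ) hτ hσ (hau' k)
        (by rw [compl_compl]; linarith [hσb (g k)]) fun x hx hlt =>
          (le_add_of_nonneg_left ((hμ _).nonneg x)).trans_lt (hsplit (g k) x hx (by rwa [add_comm]))
    exact hνa.trans_le (by linarith [hνb (g k)])

lemma exists_infinite_separated (hB : SubseqComplete B) (hμ : ∀ n, IsContent (μ n))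
    (hν : ∀ n, IsContent (ν n)) (hμc : ∀ n, μ n ⊤ ≤ c) (hνc : ∀ n, ν n ⊤ ≤ c)
    (h : ∀ m n, Separated (μ m) (ν n)) {F L : Set ℕ} (hF : F.Finite) (hL : L.Infinite)
    (hε : 0 < ε) :
    ∃ L' ⊆ L, L'.Infinite ∧ ∃ a, ∀ n ∈ F ∪ L', μ n a < ε ∧ ν n aᶜ < ε := by
  have hμσ := IsContent.absolutelyContinuous_controlContent hμ hμc
  have hντ := IsContent.absolutelyContinuous_controlContent hν hνc
  obtain ⟨δ, hδ, hμF⟩ := AbsolutelyContinuous.exists_forall_mem_finite hμσ hF hε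
  obtain ⟨δ', hδ', hνF⟩ := AbsolutelyContinuous.exists_forall_mem_finite hντ hF hε
  have hg : StrictMono (Nat.nth (· ∈ L)) := Nat.nth_strictMono hL
  obtain ⟨f, hf, a, hσa, hτa, hfa⟩ := hB.exists_strictMono_separated
    (.controlContent hμ hμc) (.controlContent hν hνc) (fun n => hμ (Nat.nth (· ∈ L) n))
    (fun n => hν (Nat.nth (· ∈ L) n)) (fun n => hμc _) (fun n => hνc _) (fun n => hμσ _)
    (fun n => hντ _) (IsContent.separated_controlContent hμ hν hμc hνc h)
    (lt_min hε (lt_min hδ hδ'))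
  simp only [lt_min_iff] at hσa hτa hfa
  refine ⟨range (Nat.nth (· ∈ L) ∘ f), range_subset_iff.2 fun k => Nat.nth_mem_of_infinite hL _,
    infinite_range_of_injective (hg.comp hf).injective, a, ?_⟩
  rintro n (hn | ⟨k, rfl⟩)
  · exact ⟨hμF a hσa.2.1 n hn, hνF _ hτa.2.2 n hn⟩
  · exact ⟨(hfa k).1.1, (hfa k).2.1⟩

end SubseqComplete

end SubsequentialCompleteness

lemma exists_infinite_forall_of_antitone {P : ℕ → Set ℕ → Prop} (hP : ∀ k, Antitone (P k))
    (h : ∀ k (F L : Set ℕ), F.Finite → L.Infinite → ∃ L' ⊆ L, L'.Infinite ∧ P k (F ∪ L')) :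
    ∃ Λ : Set ℕ, Λ.Infinite ∧ ∀ k, P k Λ := by
  have hstep (k : ℕ) (L : {L : Set ℕ // L.Infinite}) : ∃ n ∈ L.1, ∃ L' : {L : Set ℕ // L.Infinite},
      L'.1 ⊆ L.1 ∧ (∀ i ∈ L'.1, n < i) ∧ P k (Iic n ∪ L'.1) := by
    obtain ⟨L, hL⟩ := L
    obtain ⟨n, hn⟩ := hL.nonempty
    obtain ⟨L', hL', hinf, hPL'⟩ :=
      h k (Iic n) (L \ Iic n) (finite_Iic n) (hL.sdiff (finite_Iic n))
    exact ⟨n, hn, ⟨L', hinf⟩, hL'.trans sdiff_subset, fun i hi => not_le.1 (hL' hi).2, hPL'⟩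
  choose n hn next hnext hlt hPnext using hstep
  let L (k : ℕ) : {L : Set ℕ // L.Infinite} := k.rec ⟨univ, infinite_univ⟩ next
  have hL : Antitone fun k => (L k).1 := antitone_nat_of_succ_le fun k => hnext k (L k)
  have hmono : StrictMono fun k => n k (L k) :=
    strictMono_nat_of_lt_succ fun k => hlt k (L k) _ (hn (k + 1) (L (k + 1)))
  refine ⟨range fun k => n k (L k), infinite_range_of_injective hmono.injective, fun k =>
    hP k (range_subset_iff.2 fun j => ?_) (hPnext k (L k))⟩
  obtain hjk | hkj := le_or_gt j k
  · exact .inl (hmono.monotone hjk)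
  · exact .inr (hL (Nat.succ_le_of_lt hkj) (hn j (L j)))

theorem stmt12_general {B : Type*} [BooleanAlgebra B] (hB : SubseqComplete B) {μ ν : ℕ → B → ℝ}
    (hμ : ∀ n, IsContent (μ n)) (hν : ∀ n, IsContent (ν n)) {c : ℝ} (hμc : ∀ n, μ n ⊤ ≤ c)
    (hνc : ∀ n, ν n ⊤ ≤ c) (hsep : ∀ m n, Separated (μ m) (ν n)) :
    ∃ Λ : Set ℕ, Λ.Infinite ∧ ∀ ε > 0, ∃ a, (∀ m ∈ Λ, μ m a < ε) ∧ ∀ n ∈ Λ, ν n aᶜ < ε := by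
  obtain ⟨Λ, hΛ, hsepΛ⟩ := exists_infinite_forall_of_antitone
    (P := fun k s => ∃ a, ∀ n ∈ s, μ n a < 1 / (k + 1) ∧ ν n aᶜ < 1 / (k + 1))
    (fun k s t hst ⟨a, ha⟩ => ⟨a, fun n hn => ha n (hst hn)⟩)
    fun k F L hF hL =>
      hB.exists_infinite_separated hμ hν hμc hνc hsep hF hL Nat.one_div_pos_of_nat
  refine ⟨Λ, hΛ, fun ε hε => ?_⟩
  obtain ⟨k, hk⟩ := exists_nat_one_div_lt hε
  obtain ⟨a, ha⟩ := hsepΛ k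
  exact ⟨a, fun m hm => (ha m hm).1.trans hk, fun n hn => (ha n hn).2.trans hk⟩

section Clopens

open TopologicalSpace

variable {S : Type*} [TopologicalSpace S]

lemma subseqComplete_clopens
    (h : ∀ U : ℕ → Set S, (∀ n, IsClopen (U n)) → Pairwise (Disjoint on U) →
      ∃ M : Set ℕ, M.Infinite ∧ IsOpen (closure (⋃ m ∈ M, U m))) :
    SubseqComplete (Clopens S) := fun u hu => by
  obtain ⟨M, hM, hopen⟩ := h (fun n => u n) (fun n => (u n).isClopen)
    fun i j hij => Clopens.coe_disjoint.2 (hu hij)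
  refine ⟨Nat.nth (· ∈ M), Nat.nth_strictMono hM, ⟨_, isClosed_closure, hopen⟩, ?_, fun A hA => ?_⟩
  · rintro _ ⟨k, rfl⟩
    exact (subset_biUnion_of_mem (u := fun m => (u m : Set S))
      (Nat.nth_mem_of_infinite hM k)).trans subset_closure
  · refine closure_minimal (iUnion₂_subset fun m hm => ?_) A.isClopen.isClosed
    obtain ⟨k, rfl⟩ : m ∈ range (Nat.nth (· ∈ M)) := (Nat.range_nth_of_infinite hM).ge hm
    exact hA (mem_range_self k)

lemma isContent_clopens {p : Set S → ℝ} (hnonneg : ∀ A, IsOpen A → 0 ≤ p A)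
    (hadd : ∀ A B : Set S, IsOpen A → IsOpen B → Disjoint A B → p (A ∪ B) = p A + p B) :
    IsContent fun A : Clopens S => p A where
  nonneg A := hnonneg A A.isClopen.isOpen
  sup_of_disjoint {A B} hAB := hadd A B A.isClopen.isOpen B.isClopen.isOpen
    (Clopens.coe_disjoint.2 hAB)

end Clopens

/-- Uniform separation: S a Haydon space, (μₙ), (νₙ) nonnegative monotone additive
functions on the topology with μₙ(S) = νₙ(S) = 1, each pair μₘ, νₙ being 𝒰(S)-separated.
Then some infinite Λ ⊆ ℕ is such that for each ε > 0 a single clopen A ε-separates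
μₘ and νₙ simultaneously for all m, n ∈ Λ. -/
theorem stmt12 {S : Type*} [TopologicalSpace S] [CompactSpace S] [T2Space S]
    [TotallyDisconnectedSpace S]
    (hSCP : ∀ U : ℕ → Set S, (∀ n, IsClopen (U n)) →
      Pairwise (Function.onFun Disjoint U) →
      ∃ M : Set ℕ, M.Infinite ∧ IsOpen (closure (⋃ m ∈ M, U m)))
    (μ ν : ℕ → Set S → ℝ)
    (hμ_nonneg : ∀ n A, IsOpen A → 0 ≤ μ n A)
    (hμ_mono : ∀ n (A B : Set S), IsOpen A → IsOpen B → A ⊆ B → μ n A ≤ μ n B)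
    (hμ_add : ∀ n (A B : Set S), IsOpen A → IsOpen B → Disjoint A B →
      μ n (A ∪ B) = μ n A + μ n B)
    (hμ_one : ∀ n, μ n Set.univ = 1)
    (hν_nonneg : ∀ n A, IsOpen A → 0 ≤ ν n A)
    (hν_mono : ∀ n (A B : Set S), IsOpen A → IsOpen B → A ⊆ B → ν n A ≤ ν n B)
    (hν_add : ∀ n (A B : Set S), IsOpen A → IsOpen B → Disjoint A B →
      ν n (A ∪ B) = ν n A + ν n B)
    (hν_one : ∀ n, ν n Set.univ = 1)
    (hsep : ∀ m n, ∀ ε > (0 : ℝ), ∃ A : Set S, IsClopen A ∧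
      μ m A < ε ∧ ν n Aᶜ < ε) :
    ∃ Λ : Set ℕ, Λ.Infinite ∧ ∀ ε > (0 : ℝ), ∃ A : Set S, IsClopen A ∧
      (∀ m ∈ Λ, μ m A < ε) ∧ ∀ n ∈ Λ, ν n Aᶜ < ε := by
  obtain ⟨Λ, hΛ, h⟩ := stmt12_general (subseqComplete_clopens hSCP)
    (fun n => isContent_clopens (hμ_nonneg n) (hμ_add n))
    (fun n => isContent_clopens (hν_nonneg n) (hν_add n))
    (fun n => (hμ_one n).le) (fun n => (hν_one n).le)
    fun m n ε hε => let ⟨A, hA, h⟩ := hsep m n ε hε; ⟨⟨A, hA⟩, h⟩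
  exact ⟨Λ, hΛ, fun ε hε => let ⟨A, hA⟩ := h ε hε; ⟨A, A.isClopen, hA⟩⟩
end

section
/- If S is a Haydon space, then for any two sequences (μₙ), (νₙ) of Radon probability measures on S with μₘ ⊥ νₙ for all m, n (mutually singular), and any ε > 0, there exist an infinite set Λ ⊆ ℕ and disjoint compact sets A, B ⊆ S such that μₙ(A) > 1−ε and νₙ(B) > 1−ε for all n ∈ Λ. -/
open MeasureTheory
open scoped ENNReal

open Filter Function Set
open scoped NNReal symmDiff

/-!
Let `E` be a Borel set that is null for every `μ n` and conull for every `ν n`; it suffices to find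
one clopen set close to `E` for infinitely many of the measures `ρ n = μ n + ν n` at once. Take a
finite measure `κ` dominating all `ρ n`. After passing to a subsequence there are pairwise disjoint
clopen sets `R n` such that, up to a small error, the parts of the `ρ n` outside `R n` are
*uniformly* absolutely continuous with respect to `κ` (Rosenthal's subsequence splitting). Outside
the `R n` a single clopen set `C` with `κ (C ∆ E)` small does the job, and inside `R n` a clopen set
`G n` adapted to `ρ n` does. The subsequential completeness property glues `C` and the `G n`
together on an infinite set of indices, the gluing being performed inside a clopen set of small
`κ`-measure.
-/

section ClopenApproximation

variable {S : Type*} [TopologicalSpace S] [CompactSpace S] [T2Space S]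
  [TotallyDisconnectedSpace S] [MeasurableSpace S] [BorelSpace S] (μ : Measure S)
  [IsFiniteMeasure μ] [μ.InnerRegular] {η : ℝ≥0∞}

lemma exists_isClopen_measure_symmDiff_lt {E : Set S} (hE : MeasurableSet E) (hη : η ≠ 0) :
    ∃ C, IsClopen C ∧ μ (C ∆ E) < η := by
  have hη2 : η / 2 ≠ 0 := (ENNReal.half_pos hη).ne'
  obtain ⟨K, hKE, hK, hEK⟩ := hE.exists_isCompact_sdiff_lt (measure_ne_top μ E) hη2
  obtain ⟨U, hEU, hU, -, hUE⟩ := hE.exists_isOpen_sdiff_lt (measure_ne_top μ E) hη2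
  obtain ⟨C, hC, hKC, hCU⟩ := exists_clopen_of_closed_subset_open hK.isClosed hU (hKE.trans hEU)
  refine ⟨C, hC, ?_⟩
  calc μ (C ∆ E) ≤ μ (U \ E ∪ E \ K) :=
        measure_mono <| union_subset_union (sdiff_subset_sdiff_left hCU)
          (sdiff_subset_sdiff_right hKC)
    _ ≤ μ (U \ E) + μ (E \ K) := measure_union_le _ _
    _ < η / 2 + η / 2 := ENNReal.add_lt_add hUE hEK
    _ = η := ENNReal.add_halves η

lemma exists_isClopen_measure_lt_lt_measure (ρ : Measure S) [ρ.InnerRegular] {F : Set S}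
    {r : ℝ≥0∞} (hFη : μ F < η) (hrF : r < ρ F) : ∃ C, IsClopen C ∧ μ C < η ∧ r < ρ C := by
  obtain ⟨K, hKF, hK, hrK⟩ := (measurableSet_toMeasurable μ F).exists_lt_isCompact
    (hrF.trans_le (measure_mono (subset_toMeasurable μ F)))
  have hKη : μ K < η := (measure_mono hKF).trans_lt ((measure_toMeasurable F).trans_lt hFη)
  obtain ⟨U, hKU, hU, hUη⟩ := K.exists_isOpen_lt_of_lt η hKη
  obtain ⟨C, hC, hKC, hCU⟩ := exists_clopen_of_closed_subset_open hK.isClosed hU hKU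
  exact ⟨C, hC, (measure_mono hCU).trans_lt hUη, hrK.trans_le (measure_mono hKC)⟩

end ClopenApproximation

section Measure

variable {S ι : Type*} [MeasurableSpace S]

lemma exists_forall_measure_lt_of_absolutelyContinuous {μ ρ : Measure S} [SigmaFinite μ]
    [IsFiniteMeasure ρ] (h : ρ ≪ μ) {δ : ℝ≥0∞} (hδ : δ ≠ 0) :
    ∃ η ≠ 0, ∀ F, μ F < η → ρ F < δ := by
  obtain ⟨η, hη, hηδ⟩ :=
    exists_pos_setLIntegral_lt_of_measure_lt (Measure.lintegral_rnDeriv_lt_top ρ μ).ne hδ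
  exact ⟨η, hη.ne', fun F hF ↦ Measure.setLIntegral_rnDeriv h F ▸ hηδ F hF⟩

lemma exists_innerRegular_forall_absolutelyContinuous [TopologicalSpace S] [Countable ι]
    (ρ : ι → Measure S) [∀ i, IsFiniteMeasure (ρ i)] [∀ i, (ρ i).InnerRegular] :
    ∃ μ : Measure S, IsFiniteMeasure μ ∧ μ.InnerRegular ∧ ∀ i, ρ i ≪ μ := by
  obtain ⟨w, hw, hsum⟩ := ENNReal.exists_pos_tsum_mul_lt_of_countable one_ne_zero
    (fun i ↦ ρ i univ) fun i ↦ measure_ne_top (ρ i) univ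
  refine ⟨.sum fun i ↦ (w i : ℝ≥0∞) • ρ i, ⟨?_⟩, inferInstance, fun i ↦ ?_⟩
  · simpa [mul_comm] using hsum.trans ENNReal.one_lt_top
  · exact (Measure.absolutelyContinuous_smul (by simpa using (hw i).ne')).trans
      (Measure.absolutelyContinuous_sum_right i .rfl)

lemma exists_eventually_measure_le_of_pairwise_disjoint {κ : Type*} [Fintype κ]
    (𝒰 : Ultrafilter ι) {ρ : ι → Measure S} {b θ : ℝ≥0∞} (hρ : ∀ i, ρ i univ ≤ b)
    {T : κ → Set S} (hT : ∀ k, MeasurableSet (T k)) (hdisj : Pairwise (Disjoint on T))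
    (hθ : b < Fintype.card κ * θ) : ∃ k, ∀ᶠ i in 𝒰, ρ i (T k) ≤ θ := by
  by_contra! h
  have hlarge : ∀ᶠ i in 𝒰, ∀ k, θ < ρ i (T k) :=
    eventually_all.2 fun k ↦ h k
  obtain ⟨i, hi⟩ := hlarge.exists
  refine hθ.not_ge ?_
  calc Fintype.card κ * θ = ∑ _k : κ, θ := by simp
    _ ≤ ∑ k, ρ i (T k) := Finset.sum_le_sum fun k _ ↦ (hi k).le
    _ ≤ ρ i univ := sum_measure_le_measure_univ (fun k _ ↦ (hT k).nullMeasurableSet)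
        fun k _ k' _ hk ↦ (hdisj hk).aedisjoint
    _ ≤ b := hρ i

end Measure

section AbsContOff

variable {S : Type*} [MeasurableSpace S]

/-- `AbsContOff μ ρ η δ R` is quantitative absolute continuity of `ρ` with respect to `μ` outside
`R`: sets of `μ`-measure less than `η` have `ρ`-measure at most `δ` once `R` is removed. Keeping `η`
and `δ` explicit lets the property hold uniformly along a sequence of measures `ρ`, each with its
own set `R`. -/
def AbsContOff (μ ρ : Measure S) (η δ : ℝ≥0∞) (R : Set S) : Prop :=
  ∀ F, μ F < η → ρ (F \ R) ≤ δ

namespace AbsContOff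

variable {μ ρ : Measure S} {η δ : ℝ≥0∞} {R : Set S}

lemma sdiff_biUnion {ι : Type*} (h : AbsContOff μ ρ η δ R) {s : Finset ι} {U : ι → Set S} {θ : ℝ≥0∞}
    (hU : ∑ i ∈ s, ρ (U i) ≤ θ) : AbsContOff μ ρ η (δ + θ) (R \ ⋃ i ∈ s, U i) := by
  intro F hF
  have hsub : F \ (R \ ⋃ i ∈ s, U i) ⊆ F \ R ∪ ⋃ i ∈ s, U i := by grind
  calc ρ (F \ (R \ ⋃ i ∈ s, U i)) ≤ ρ (F \ R) + ρ (⋃ i ∈ s, U i) :=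
        (measure_mono hsub).trans (measure_union_le _ _)
    _ ≤ δ + θ := add_le_add (h F hF) ((measure_biUnion_finset_le s U).trans hU)

-- If `R` already carries almost the largest possible mass of a `μ`-small set, little is left over.
lemma of_le_measure {a : ℝ≥0∞} (h : AbsContOff μ ρ η (a + δ) ∅) (hR : MeasurableSet R)
    (hRη : μ R < η / 2) (ha : a ≠ ∞) (haR : a ≤ ρ R) : AbsContOff μ ρ (η / 2) δ R := by
  intro F hF
  have hRF : μ (R ∪ F) < η :=
    calc μ (R ∪ F) ≤ μ R + μ F := measure_union_le R F
      _ < η / 2 + η / 2 := ENNReal.add_lt_add hRη hF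
      _ = η := ENNReal.add_halves η
  refine (ENNReal.add_le_add_iff_left ha).1 ?_
  calc a + ρ (F \ R) ≤ ρ R + ρ (F \ R) := by gcongr
    _ = ρ (R ∪ F) := by rw [← measure_union' disjoint_sdiff_right hR, union_sdiff_self]
    _ ≤ a + δ := by simpa using h _ hRF

end AbsContOff

end AbsContOff

section Splitting

variable {S ι : Type*} [TopologicalSpace S] [MeasurableSpace S] {η δ δ' : ℝ≥0∞} {b : ℝ≥0}

lemma exists_eventually_isClopen_absContOff [CompactSpace S] [T2Space S]
    [TotallyDisconnectedSpace S] [BorelSpace S] (𝒰 : Ultrafilter ι) (μ : Measure S)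
    [IsFiniteMeasure μ] [μ.InnerRegular] (ρ : ι → Measure S) [∀ i, (ρ i).InnerRegular]
    (hρ : ∀ i, ρ i univ ≤ b) (hδ : δ ≠ 0) :
    ∃ η₀ ≠ 0, ∀ η ≠ 0, ∀ᶠ i in 𝒰, ∃ R, IsClopen R ∧ μ R < η ∧ AbsContOff μ (ρ i) η₀ δ R := by
  let Q : ℕ → Prop := fun k ↦ ∃ η ≠ 0, ∀ᶠ i in 𝒰, AbsContOff μ (ρ i) η (k * δ) ∅
  have hQ : ∃ k, Q k := by
    obtain ⟨k, hk⟩ := ENNReal.exists_nat_mul_gt hδ (ENNReal.coe_ne_top (r := b))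
    exact ⟨k, 1, one_ne_zero, .of_forall fun i F _ ↦
      (measure_mono (subset_univ _)).trans ((hρ i).trans hk.le)⟩
  by_cases hQ0 : Q 0
  · obtain ⟨η₀, hη₀, h⟩ := hQ0
    refine ⟨η₀, hη₀, fun η hη ↦ h.mono fun i hi ↦ ⟨∅, isClopen_empty, ?_, fun F hF ↦ ?_⟩⟩
    · simpa using pos_iff_ne_zero.2 hη
    · exact (hi F hF).trans (by simp)
  obtain ⟨k, hk, η₁, hη₁, hk_succ⟩ := Nat.exists_not_and_succ_of_not_zero_of_exists hQ0 hQ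
  refine ⟨η₁ / 2, (ENNReal.half_pos hη₁).ne', fun η hη ↦ ?_⟩
  have hmin : min η (η₁ / 2) ≠ 0 := (lt_min (pos_iff_ne_zero.2 hη) (ENNReal.half_pos hη₁)).ne'
  have hlarge : ∀ᶠ i in 𝒰, ¬ AbsContOff μ (ρ i) (min η (η₁ / 2)) (k * δ) ∅ :=
    Ultrafilter.eventually_not.2 fun h ↦ hk ⟨_, hmin, h⟩
  filter_upwards [hk_succ, hlarge] with i hi hi_large
  obtain ⟨F, hF, hkF⟩ : ∃ F, μ F < min η (η₁ / 2) ∧ k * δ < ρ i F := by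
    simpa only [AbsContOff, sdiff_empty, not_forall, not_le, exists_prop] using hi_large
  obtain ⟨R, hR, hRη, hkR⟩ := exists_isClopen_measure_lt_lt_measure μ (ρ i) hF hkF
  rw [Nat.cast_add_one, add_one_mul] at hi
  exact ⟨R, hR, hRη.trans_le (min_le_left _ _),
    hi.of_le_measure hR.isOpen.measurableSet (hRη.trans_le (min_le_right _ _)) hkF.ne_top hkR.le⟩

/- Otherwise one finds `N` bad indices whose sets `R` are nearly negligible for the measures chosen
before them. Removing the later sets from the earlier ones makes them disjoint, so for `N` large one
of them has small measure along `𝒰` after all. -/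
lemma eventually_exists_isClopen_eventually_measure_le [OpensMeasurableSpace S]
    (𝒰 : Ultrafilter ι) {μ : Measure S}
    [SigmaFinite μ] {ρ : ι → Measure S} (hρ : ∀ i, ρ i univ ≤ b) (hac : ∀ i, ρ i ≪ μ)
    (hδ' : δ' ≠ 0)
    (hR : ∀ γ ≠ 0, ∀ᶠ i in 𝒰, ∃ R, IsClopen R ∧ μ R < γ ∧ AbsContOff μ (ρ i) η δ R)
    {θ : ℝ≥0∞} (hθ : θ ≠ 0) :
    ∀ᶠ i in 𝒰, ∃ R, IsClopen R ∧ AbsContOff μ (ρ i) η (δ + δ') R ∧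
      ∀ᶠ j in 𝒰, ρ j R ≤ θ := by
  by_contra hbad
  rw [← Ultrafilter.eventually_not] at hbad
  have : ∀ i, IsFiniteMeasure (ρ i) := fun i ↦ ⟨(hρ i).trans_lt ENNReal.coe_lt_top⟩
  obtain ⟨N, hN⟩ := ENNReal.exists_nat_mul_gt hθ (ENNReal.coe_ne_top (r := b))
  choose γ hγ hργ using fun i ↦ exists_forall_measure_lt_of_absolutelyContinuous (hac i)
    (ENNReal.div_ne_zero.2 ⟨hδ', ENNReal.natCast_ne_top N⟩)
  obtain ⟨f, hf, hf_small⟩ := exists_seq_of_forall_finset_exists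
    (fun x : ι × Set S ↦ (¬ ∃ R, IsClopen R ∧ AbsContOff μ (ρ x.1) η (δ + δ') R ∧
      ∀ᶠ j in 𝒰, ρ j R ≤ θ) ∧ IsClopen x.2 ∧ AbsContOff μ (ρ x.1) η δ x.2)
    (fun x y ↦ ρ x.1 y.2 < δ' / N) fun s _ ↦ by
      have hinf : s.inf (fun x ↦ γ x.1) ≠ 0 := pos_iff_ne_zero.1 <|
        (Finset.lt_inf_iff ENNReal.zero_lt_top).2 fun x _ ↦ pos_iff_ne_zero.2 (hγ x.1)
      obtain ⟨i, hi, R, hR, hRs, hiR⟩ := (hbad.and (hR _ hinf)).exists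
      exact ⟨(i, R), ⟨hi, hR, hiR⟩, fun x hx ↦
        hργ x.1 R (hRs.trans_le (Finset.inf_le (f := fun x : ι × Set S ↦ γ x.1) hx))⟩
  let T : Fin N → Set S := fun k ↦ (f k).2 \ ⋃ l ∈ Finset.Ioi k, (f l).2
  have hT : ∀ k, IsClopen (T k) := fun k ↦
    (hf k).2.1.diff (isClopen_biUnion_finset fun l _ ↦ (hf l).2.1)
  have hdisj : Pairwise (Disjoint on T) := (pairwise_disjoint_on T).2 fun k l hkl ↦
    disjoint_left.2 fun x hxk hxl ↦ hxk.2 (mem_biUnion (Finset.mem_Ioi.2 hkl) hxl.1)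
  have hsum : ∀ k : Fin N, ∑ l ∈ Finset.Ioi k, ρ (f k).1 (f l).2 ≤ δ' := fun k ↦
    calc ∑ l ∈ Finset.Ioi k, ρ (f k).1 (f l).2 ≤ ∑ _l ∈ Finset.Ioi k, δ' / N :=
          Finset.sum_le_sum fun (l : Fin N) hl ↦
            (hf_small k l (Fin.lt_def.1 (Finset.mem_Ioi.1 hl))).le
      _ ≤ ∑ _l : Fin N, δ' / N := Finset.sum_le_sum_of_subset (Finset.subset_univ _)
      _ ≤ δ' := by simpa using ENNReal.mul_div_le
  obtain ⟨k, hk⟩ := exists_eventually_measure_le_of_pairwise_disjoint 𝒰 hρ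
    (fun k ↦ (hT k).isOpen.measurableSet) hdisj (by simpa using hN)
  exact (hf k).1 ⟨T k, hT k, (hf k).2.2.sdiff_biUnion (hsum k), hk⟩

lemma exists_strictMono_pairwise_disjoint_of_eventually_measure_le {l : Filter ℕ} [l.NeBot]
    (hl : l ≤ atTop) {μ : Measure S} {ρ : ℕ → Measure S} (hδ' : δ' ≠ 0)
    (h : ∀ θ ≠ 0, ∀ᶠ n in l, ∃ R, IsClopen R ∧ AbsContOff μ (ρ n) η δ R ∧
      ∀ᶠ m in l, ρ m R ≤ θ) :
    ∃ (φ : ℕ → ℕ) (R : ℕ → Set S), StrictMono φ ∧ (∀ j, IsClopen (R j)) ∧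
      Pairwise (Disjoint on R) ∧ ∀ j, AbsContOff μ (ρ (φ j)) η (δ + δ') (R j) := by
  obtain ⟨w, hw, hwδ⟩ := ENNReal.exists_pos_sum_of_countable hδ' ℕ
  -- The entries of a triple are an index `n`, the position `k` of a weight `w k`, and a set `R`.
  obtain ⟨f, hf, hf_lt⟩ := exists_seq_of_forall_finset_exists
    (fun x : ℕ × ℕ × Set S ↦ IsClopen x.2.2 ∧ AbsContOff μ (ρ x.1) η δ x.2.2 ∧
      ∀ᶠ m in l, ρ m x.2.2 ≤ w x.2.1)
    (fun x y ↦ x.1 < y.1 ∧ x.2.1 < y.2.1 ∧ ρ y.1 x.2.2 ≤ w x.2.1) fun s hs ↦ by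
      let k := s.sup (fun x ↦ x.2.1) + 1
      have hsmall : ∀ᶠ n in l, ∀ x ∈ s, x.1 < n ∧ ρ n x.2.2 ≤ w x.2.1 :=
        (eventually_all_finset s).2 fun x hx ↦
          ((eventually_gt_atTop x.1).filter_mono hl).and (hs x hx).2.2
      obtain ⟨n, hn, R, hR⟩ := (hsmall.and (h (w k) (by simpa using (hw k).ne'))).exists
      exact ⟨(n, k, R), hR, fun x hx ↦ ⟨(hn x hx).1,
        Nat.lt_succ_of_le (Finset.le_sup (f := fun x : ℕ × ℕ × Set S ↦ x.2.1) hx), (hn x hx).2⟩⟩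
  let T : ℕ → Set S := fun j ↦ (f j).2.2 \ ⋃ i ∈ Finset.range j, (f i).2.2
  have hT : ∀ j, IsClopen (T j) := fun j ↦
    (hf j).1.diff (isClopen_biUnion_finset fun i _ ↦ (hf i).1)
  have hdisj : Pairwise (Disjoint on T) := (pairwise_disjoint_on T).2 fun i j hij ↦
    disjoint_left.2 fun x hxi hxj ↦ hxj.2 (mem_biUnion (Finset.mem_range.2 hij) hxi.1)
  have hk : StrictMono fun j ↦ (f j).2.1 := fun i j hij ↦ (hf_lt i j hij).2.1
  have hsum : ∀ j, ∑ i ∈ Finset.range j, ρ (f j).1 (f i).2.2 ≤ δ' := fun j ↦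
    calc ∑ i ∈ Finset.range j, ρ (f j).1 (f i).2.2
        ≤ ∑ i ∈ Finset.range j, (w (f i).2.1 : ℝ≥0∞) :=
          Finset.sum_le_sum fun i hi ↦ (hf_lt i j (Finset.mem_range.1 hi)).2.2
      _ ≤ ∑' i, (w (f i).2.1 : ℝ≥0∞) := ENNReal.sum_le_tsum _
      _ ≤ ∑' k, (w k : ℝ≥0∞) :=
          ENNReal.tsum_comp_le_tsum_of_injective hk.injective fun k ↦ (w k : ℝ≥0∞)
      _ ≤ δ' := hwδ.le
  exact ⟨fun j ↦ (f j).1, T, fun i j hij ↦ (hf_lt i j hij).1, hT, hdisj,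
    fun j ↦ (hf j).2.1.sdiff_biUnion (hsum j)⟩

theorem exists_strictMono_pairwise_disjoint_isClopen_absContOff [CompactSpace S] [T2Space S]
    [TotallyDisconnectedSpace S] [BorelSpace S] (μ : Measure S) [IsFiniteMeasure μ] [μ.InnerRegular]
    (ρ : ℕ → Measure S) [∀ n, (ρ n).InnerRegular] (hρ : ∀ n, ρ n univ ≤ b)
    (hac : ∀ n, ρ n ≪ μ) (hδ : δ ≠ 0) :
    ∃ η ≠ 0, ∃ (φ : ℕ → ℕ) (R : ℕ → Set S), StrictMono φ ∧ (∀ j, IsClopen (R j)) ∧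
      Pairwise (Disjoint on R) ∧ ∀ j, AbsContOff μ (ρ (φ j)) η δ (R j) := by
  have hδ3 : δ / 3 ≠ 0 := (ENNReal.div_pos hδ ENNReal.ofNat_ne_top).ne'
  obtain ⟨η, hη, hR⟩ := exists_eventually_isClopen_absContOff (hyperfilter ℕ) μ ρ hρ hδ3
  refine ⟨η, hη, ?_⟩
  rw [← ENNReal.add_thirds δ]
  exact exists_strictMono_pairwise_disjoint_of_eventually_measure_le Nat.hyperfilter_le_atTop hδ3
    fun θ hθ ↦ eventually_exists_isClopen_eventually_measure_le _ hρ hac hδ3 hR hθ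

end Splitting

section Haydon

/-- The subsequential completeness property of the algebra of clopen subsets of `S`. For `S` the
Stone space of a Boolean algebra `𝔄`, openness of the closure of the union says that the subfamily
has a supremum in `𝔄`. A Haydon space is a totally disconnected compact Hausdorff space with this
property. -/
def SubsequentialCompleteness (S : Type*) [TopologicalSpace S] : Prop :=
  ∀ U : ℕ → Set S, (∀ n, IsClopen (U n)) → Pairwise (Disjoint on U) →
    ∃ M : Set ℕ, M.Infinite ∧ IsOpen (closure (⋃ m ∈ M, U m))

variable {S : Type*} [TopologicalSpace S]

lemma closure_biUnion_inter_eq_of_pairwise_disjoint {ι : Type*} {R G : ι → Set S} {M : Set ι}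
    {j : ι} (hR : IsOpen (R j)) (hdisj : Pairwise (Disjoint on R)) (hG : IsClosed (G j))
    (hj : j ∈ M) :
    closure (⋃ m ∈ M, G m ∩ R m) ∩ R j = G j ∩ R j := by
  refine Subset.antisymm (fun x ⟨hx, hxR⟩ ↦ ⟨?_, hxR⟩) fun x hx ↦
    ⟨subset_closure (mem_biUnion hj hx), hx.2⟩
  have hsub : ⋃ m ∈ M, G m ∩ R m ⊆ G j ∪ (R j)ᶜ := iUnion₂_subset fun m _ y hy ↦ by
    rcases eq_or_ne m j with rfl | hmj
    · exact .inl hy.1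
    · exact .inr (disjoint_left.1 (hdisj hmj) hy.2)
  exact (closure_minimal hsub (hG.union hR.isClosed_compl) hx).resolve_right (not_not_intro hxR)

namespace SubsequentialCompleteness

variable {R G : ℕ → Set S}

lemma exists_infinite_isClopen_inter_eq (hS : SubsequentialCompleteness S)
    (hR : ∀ j, IsClopen (R j)) (hdisj : Pairwise (Disjoint on R)) (hG : ∀ j, IsClopen (G j)) :
    ∃ M : Set ℕ, M.Infinite ∧ ∃ V, IsClopen V ∧ ∀ j ∈ M, V ∩ R j = G j ∩ R j := by
  obtain ⟨M, hM, hV⟩ := hS (fun j ↦ G j ∩ R j) (fun j ↦ (hG j).inter (hR j))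
    fun i j hij ↦ (hdisj hij).mono inter_subset_right inter_subset_right
  exact ⟨M, hM, _, ⟨isClosed_closure, hV⟩, fun j hj ↦
    closure_biUnion_inter_eq_of_pairwise_disjoint (hR j).isOpen hdisj (hG j).isClosed hj⟩

variable [MeasurableSpace S]

/- Split `M` into infinitely many infinite sets. The clopen sets obtained from these are pairwise
disjoint, so one of them has small measure. -/
lemma exists_infinite_subset_isClopen_measure_lt [OpensMeasurableSpace S]
    (hS : SubsequentialCompleteness S) (hR : ∀ j, IsClopen (R j)) (hdisj : Pairwise (Disjoint on R))
    (μ : Measure S) [IsFiniteMeasure μ] {η : ℝ≥0∞} (hη : η ≠ 0) {M : Set ℕ} (hM : M.Infinite) :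
    ∃ L ⊆ M, L.Infinite ∧ ∃ X, IsClopen X ∧ μ X < η ∧ ∀ j ∈ L, R j ⊆ X := by
  let g : ℕ → ℕ → ℕ := fun i j ↦ hM.natEmbedding M (Nat.pair i j)
  have hg : ∀ {i j i' j'}, g i j = g i' j' → i = i' ∧ j = j' := fun h ↦
    Nat.pair_eq_pair.1 ((hM.natEmbedding M).injective (Subtype.ext h))
  choose L hL hLopen using fun i ↦ hS (fun j ↦ R (g i j)) (fun j ↦ hR _)
    fun j j' hj ↦ hdisj fun h ↦ hj (hg h).2
  let X : ℕ → Set S := fun i ↦ closure (⋃ j ∈ L i, R (g i j))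
  have hX : Pairwise (Disjoint on X) := by
    intro i i' hi
    have hunion : Disjoint (⋃ j ∈ L i, R (g i j)) (⋃ j ∈ L i', R (g i' j)) := by
      simp only [disjoint_iUnion_left, disjoint_iUnion_right]
      exact fun j _ j' _ ↦ hdisj fun h ↦ hi (hg h).1
    exact (hunion.closure_left (isOpen_biUnion fun j _ ↦ (hR _).isOpen)).closure_right (hLopen i)
  obtain ⟨i, hi⟩ : ∃ i, μ (X i) < η := by
    by_contra! h
    have hfin : {i | η ≤ μ (X i)}.Finite :=
      Measure.finite_const_le_meas_of_disjoint_iUnion μ (pos_iff_ne_zero.2 hη)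
        (fun i ↦ isClosed_closure.measurableSet) hX (measure_ne_top _ _)
    exact infinite_univ (hfin.subset fun i _ ↦ h i)
  refine ⟨g i '' L i, image_subset_iff.2 fun j _ ↦ (hM.natEmbedding M _).2,
    (hL i).image fun j _ j' _ h ↦ (hg h).2, X i, ⟨isClosed_closure, hLopen i⟩, hi, ?_⟩
  rintro _ ⟨j, hj, rfl⟩
  exact (subset_biUnion_of_mem (u := fun j ↦ R (g i j)) hj).trans subset_closure

lemma exists_infinite_isClopen_glue [OpensMeasurableSpace S]
    (hS : SubsequentialCompleteness S) (hR : ∀ j, IsClopen (R j)) (hdisj : Pairwise (Disjoint on R))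
    (hG : ∀ j, IsClopen (G j)) {C : Set S} (hC : IsClopen C) (μ : Measure S) [IsFiniteMeasure μ]
    {η : ℝ≥0∞} (hη : η ≠ 0) :
    ∃ L : Set ℕ, L.Infinite ∧ ∃ X B, IsClopen B ∧ μ X < η ∧ B \ X = C \ X ∧
      ∀ j ∈ L, B ∩ R j = G j ∩ R j := by
  obtain ⟨M, hM, V, hV, hVG⟩ := hS.exists_infinite_isClopen_inter_eq hR hdisj hG
  obtain ⟨L, hLM, hL, X, hX, hXη, hRX⟩ :=
    hS.exists_infinite_subset_isClopen_measure_lt hR hdisj μ hη hM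
  refine ⟨L, hL, X, (C \ X) ∪ (V ∩ X), (hC.diff hX).union (hV.inter hX), hXη, by grind,
    fun j hj ↦ ?_⟩
  rw [← hVG j (hLM hj)]
  grind [hRX j hj]

theorem exists_infinite_isClopen_measure_symmDiff_lt [CompactSpace S] [T2Space S]
    [TotallyDisconnectedSpace S] [BorelSpace S] (hS : SubsequentialCompleteness S)
    (ρ : ℕ → Measure S) [∀ n, (ρ n).InnerRegular] {b : ℝ≥0} (hρ : ∀ n, ρ n univ ≤ b)
    {E : Set S} (hE : MeasurableSet E) {ε : ℝ≥0∞} (hε : ε ≠ 0) :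
    ∃ Λ : Set ℕ, Λ.Infinite ∧ ∃ B, IsClopen B ∧ ∀ n ∈ Λ, ρ n (B ∆ E) < ε := by
  have : ∀ n, IsFiniteMeasure (ρ n) := fun n ↦ ⟨(hρ n).trans_lt ENNReal.coe_lt_top⟩
  have hε3 : ε / 3 ≠ 0 := (ENNReal.div_pos hε ENNReal.ofNat_ne_top).ne'
  obtain ⟨κ, _, _, hac⟩ := exists_innerRegular_forall_absolutelyContinuous ρ
  obtain ⟨η, hη, φ, R, hφ, hR, hdisj, hoff⟩ :=
    exists_strictMono_pairwise_disjoint_isClopen_absContOff κ ρ hρ hac hε3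
  obtain ⟨C, hC, hCE⟩ := exists_isClopen_measure_symmDiff_lt κ hE hη
  choose G hG hGE using fun j ↦ exists_isClopen_measure_symmDiff_lt (ρ (φ j)) hE hε3
  obtain ⟨L, hL, X, B, hB, hXη, hBX, hBR⟩ :=
    hS.exists_infinite_isClopen_glue hR hdisj hG hC κ hη
  refine ⟨φ '' L, hL.image hφ.injective.injOn, B, hB, forall_mem_image.2 fun j hj ↦ ?_⟩
  have hsub : B ∆ E ⊆ (C ∆ E) \ R j ∪ X \ R j ∪ G j ∆ E := by
    intro x
    have hxX := Set.ext_iff.1 hBX x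
    have hxR := Set.ext_iff.1 (hBR j hj) x
    simp only [mem_union, Set.mem_sdiff, mem_inter_iff, mem_symmDiff] at *
    tauto
  calc ρ (φ j) (B ∆ E)
      ≤ ρ (φ j) ((C ∆ E) \ R j) + ρ (φ j) (X \ R j) + ρ (φ j) (G j ∆ E) :=
        (measure_mono hsub).trans <| (measure_union_le _ _).trans <|
          add_le_add_left (measure_union_le _ _) _
    _ < ε / 3 + ε / 3 + ε / 3 :=
        ENNReal.add_lt_add_of_le_of_lt (by finiteness)
          (add_le_add (hoff j _ hCE) (hoff j _ hXη)) (hGE j)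
    _ = ε := ENNReal.add_thirds ε

end SubsequentialCompleteness

end Haydon

lemma one_sub_lt_measure_of_measure_compl_lt {S : Type*} [MeasurableSpace S] {μ : Measure S}
    [IsProbabilityMeasure μ] {A : Set S} (hA : MeasurableSet A) {ε : ℝ≥0∞}
    (h : μ Aᶜ < min ε 1) : 1 - ε < μ A :=
  (tsub_le_tsub_left (min_le_left ε 1) 1).trans_lt <|
    ENNReal.sub_lt_of_sub_lt (min_le_right ε 1) (.inl ENNReal.one_ne_top)
      (prob_compl_eq_one_sub (μ := μ) hA ▸ h)

theorem stmt13_general {S : Type*} [TopologicalSpace S] [CompactSpace S] [T2Space S]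
    [TotallyDisconnectedSpace S] [MeasurableSpace S] [BorelSpace S]
    (hS : SubsequentialCompleteness S) (μ ν : ℕ → Measure S) [∀ n, (μ n).InnerRegular]
    [∀ n, (ν n).InnerRegular] {b : ℝ≥0} (hμ : ∀ n, μ n univ ≤ b) (hν : ∀ n, ν n univ ≤ b)
    (hsing : ∀ m n, μ m ⟂ₘ ν n) {ε : ℝ≥0∞} (hε : ε ≠ 0) :
    ∃ Λ : Set ℕ, Λ.Infinite ∧ ∃ A, IsClopen A ∧ ∀ n ∈ Λ, μ n Aᶜ < ε ∧ ν n A < ε := by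
  obtain ⟨E, hE, hμE, hνE⟩ : Measure.sum μ ⟂ₘ Measure.sum ν :=
    Measure.MutuallySingular.sum_left.2 fun m ↦ Measure.MutuallySingular.sum_right.2 (hsing m)
  replace hμE := (Measure.sum_apply_eq_zero' hE).1 hμE
  replace hνE := (Measure.sum_apply_eq_zero' hE.compl).1 hνE
  obtain ⟨Λ, hΛ, B, hB, hBE⟩ := hS.exists_infinite_isClopen_measure_symmDiff_lt
    (fun n ↦ μ n + ν n) (b := b + b) (fun n ↦ by simpa using add_le_add (hμ n) (hν n)) hE hε
  refine ⟨Λ, hΛ, Bᶜ, hB.compl, fun n hn ↦ ⟨?_, ?_⟩⟩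
  · calc μ n Bᶜᶜ = μ n (B \ E) := by rw [compl_compl, measure_sdiff_null (hμE n)]
      _ ≤ μ n (B ∆ E) := measure_mono le_sup_left
      _ ≤ (μ n + ν n) (B ∆ E) := le_self_add
      _ < ε := hBE n hn
  · calc ν n Bᶜ = ν n (E \ B) := by rw [← measure_sdiff_null (hνE n), compl_sdiff_compl]
      _ ≤ ν n (B ∆ E) := measure_mono le_sup_right
      _ ≤ (μ n + ν n) (B ∆ E) := le_add_self
      _ < ε := hBE n hn

/-- On a Haydon space, for two sequences of pairwise mutually singular Radon probability
measures one can find an infinite Λ ⊆ ℕ and disjoint compact sets A, B almost carrying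
all μₙ resp. νₙ, n ∈ Λ, simultaneously. -/
theorem stmt13 {S : Type*} [TopologicalSpace S] [CompactSpace S] [T2Space S]
    [TotallyDisconnectedSpace S]
    [MeasurableSpace S] [BorelSpace S]
    (hSCP : ∀ U : ℕ → Set S, (∀ n, IsClopen (U n)) →
      Pairwise (Function.onFun Disjoint U) →
      ∃ M : Set ℕ, M.Infinite ∧ IsOpen (closure (⋃ m ∈ M, U m)))
    (μ ν : ℕ → Measure S)
    (hμ_prob : ∀ n, IsProbabilityMeasure (μ n))
    (hν_prob : ∀ n, IsProbabilityMeasure (ν n))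
    (hμ_reg : ∀ n, (μ n).InnerRegular)
    (hν_reg : ∀ n, (ν n).InnerRegular)
    (hsing : ∀ m n, (μ m).MutuallySingular (ν n))
    (ε : ℝ≥0∞) (hε : 0 < ε) :
    ∃ Λ : Set ℕ, Λ.Infinite ∧ ∃ A B : Set S, IsCompact A ∧ IsCompact B ∧
      Disjoint A B ∧ ∀ n ∈ Λ, 1 - ε < μ n A ∧ 1 - ε < ν n B := by
  obtain ⟨Λ, hΛ, A, hA, hμν⟩ := stmt13_general hSCP μ ν (b := 1) (by simp) (by simp) hsing
    (lt_min hε one_pos).ne'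
  exact ⟨Λ, hΛ, A, Aᶜ, hA.isClosed.isCompact, hA.compl.isClosed.isCompact, disjoint_compl_right,
    fun n hn ↦ ⟨one_sub_lt_measure_of_measure_compl_lt hA.isOpen.measurableSet (hμν n hn).1,
      one_sub_lt_measure_of_measure_compl_lt hA.compl.isOpen.measurableSet
        (by simpa using (hμν n hn).2)⟩⟩
end
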